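/- arXiv:1201.5334 — 6 statements merged into one kernel-verified Lean document; each statement's English description precedes it below -/
import Mathlib

section
/- Robertson's uncertainty relation for mixed states: for any Hermitian n×n complex matrices A and B and any density matrix ρ, σ(A;ρ)·σ(B;ρ) ≥ (1/2)·|Tr[(AB − BA)ρ]|. -/
open ComplexOrder

/-- The standard deviation of a Hermitian matrix `A` in the state `ρ`:
`σ(A;ρ)² = Tr[A²ρ] − (Tr[Aρ])²`. -/
noncomputable def stddev {n : ℕ} (A ρ : Matrix (Fin n) (Fin n) ℂ) : ℝ :=
  Real.sqrt ((A * A * ρ).trace.re - ((A * ρ).trace.re) ^ 2)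

/-! A density matrix `ρ` is the state `A ↦ Tr[Aρ]` on the C⋆-algebra of matrices. In the GNS
semi-inner product `⟪a, b⟫ = φ(a⋆b)` of a state `φ`, the centred elements `a - φ(a)1` have the
covariances of `φ` as inner products and the standard deviations as norms, so the Cauchy–Schwarz
inequality bounds `|cov(a, b)|` by `σ(a)σ(b)`. For self-adjoint `a` and `b`, the products of
expectations cancel in `cov(a, b) - cov(b, a)`, which leaves `φ(ab - ba)`. -/

section State

open scoped InnerProductSpace

variable {𝒜 : Type*} [CStarAlgebra 𝒜] [PartialOrder 𝒜]

/-- The covariance of `a` and `b` in a state `φ`, that is, a positive functional with `φ 1 = 1`; the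
formula is written for an arbitrary positive functional. The star on the first argument, as in the
GNS inner product, makes the covariance in a state a semi-inner product on the whole algebra and not
only on the self-adjoint elements. -/
noncomputable def stateCov (φ : 𝒜 →ₚ[ℂ] ℂ) (a b : 𝒜) : ℂ :=
  φ (star a * b) - star (φ a) * φ b

/-- The standard deviation of `a` in a state `φ`, the square root of the variance
`stateCov φ a a`. -/
noncomputable def stateStdDev (φ : 𝒜 →ₚ[ℂ] ℂ) (a : 𝒜) : ℝ :=
  √(stateCov φ a a).re

variable [StarOrderedRing 𝒜] {φ : 𝒜 →ₚ[ℂ] ℂ}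

lemma stateCov_eq_inner (hφ : φ 1 = 1) (a b : 𝒜) :
    stateCov φ a b = ⟪φ.toPreGNS (a - φ a • 1), φ.toPreGNS (b - φ b • 1)⟫_ℂ := by
  simp [stateCov, PositiveLinearMap.preGNS_inner_def, sub_mul, mul_sub, map_star, hφ]

lemma stateStdDev_eq_norm (hφ : φ 1 = 1) (a : 𝒜) :
    stateStdDev φ a = ‖φ.toPreGNS (a - φ a • 1)‖ := by
  rw [stateStdDev, stateCov_eq_inner hφ, ← RCLike.re_eq_complex_re, ← norm_eq_sqrt_re_inner]

lemma norm_stateCov_le (hφ : φ 1 = 1) (a b : 𝒜) :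
    ‖stateCov φ a b‖ ≤ stateStdDev φ a * stateStdDev φ b := by
  rw [stateCov_eq_inner hφ, stateStdDev_eq_norm hφ, stateStdDev_eq_norm hφ]
  exact norm_inner_le_norm _ _

lemma stateCov_sub_stateCov_swap {a b : 𝒜} (ha : IsSelfAdjoint a) (hb : IsSelfAdjoint b) :
    stateCov φ a b - stateCov φ b a = φ (a * b - b * a) := by
  rw [stateCov, stateCov, ha.star_eq, hb.star_eq, (ha.map φ).star_eq, (hb.map φ).star_eq, map_sub]
  ring

theorem robertson_uncertainty_mixed_general (hφ : φ 1 = 1) {a b : 𝒜}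
    (ha : IsSelfAdjoint a) (hb : IsSelfAdjoint b) :
    stateStdDev φ a * stateStdDev φ b ≥ (1 / 2) * ‖φ (a * b - b * a)‖ := by
  have htriangle := norm_sub_le (stateCov φ a b) (stateCov φ b a)
  rw [stateCov_sub_stateCov_swap ha hb] at htriangle
  linarith [norm_stateCov_le hφ a b, norm_stateCov_le hφ b a]

end State

section DensityMatrix

open Matrix
open scoped MatrixOrder Matrix.Norms.L2Operator

variable {m : Type*} [Fintype m]

lemma trace_mul_nonneg_of_posSemidef {𝕜 : Type*} [RCLike 𝕜] {A ρ : Matrix m m 𝕜}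
    (hA : A.PosSemidef) (hρ : ρ.PosSemidef) : 0 ≤ (A * ρ).trace := by
  classical
  obtain ⟨X, rfl⟩ := CStarAlgebra.nonneg_iff_eq_star_mul_self.mp hA.nonneg
  rw [mul_assoc, trace_mul_comm]
  exact (hρ.mul_mul_conjTranspose_same X).trace_nonneg

/-- The expectation functional `A ↦ Tr[Aρ]` of a positive semidefinite matrix `ρ`. It is a state
when `ρ` is a density matrix; the trace of `ρ` is left free because positivity does not need it. -/
noncomputable def traceExpectation {ρ : Matrix m m ℂ} (hρ : ρ.PosSemidef) :
    Matrix m m ℂ →ₚ[ℂ] ℂ :=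
  .mk₀ (traceLinearMap m ℂ ℂ ∘ₗ LinearMap.mulRight ℂ ρ)
    fun _ hA ↦ trace_mul_nonneg_of_posSemidef hA.posSemidef hρ

lemma traceExpectation_apply {ρ : Matrix m m ℂ} (hρ : ρ.PosSemidef) (A : Matrix m m ℂ) :
    traceExpectation hρ A = (A * ρ).trace :=
  rfl

lemma stateStdDev_traceExpectation {n : ℕ} {A ρ : Matrix (Fin n) (Fin n) ℂ}
    (hρ : ρ.PosSemidef) (hA : A.IsHermitian) :
    stateStdDev (traceExpectation hρ) A = stddev A ρ := by
  have hreal : star (traceExpectation hρ A) = traceExpectation hρ A := hA.isSelfAdjoint.map _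
  have him : (A * ρ).trace.im = 0 := Complex.conj_eq_iff_im.mp hreal
  simp [stateStdDev, stateCov, stddev, traceExpectation_apply, star_eq_conjTranspose, hA.eq, him,
    sq]

end DensityMatrix

/-- Robertson's uncertainty relation for mixed states. -/
theorem robertson_uncertainty_mixed {n : ℕ} (hn : 0 < n)
    (A B ρ : Matrix (Fin n) (Fin n) ℂ)
    (hA : A.IsHermitian) (hB : B.IsHermitian)
    (hρ : ρ.PosSemidef) (hρtr : ρ.trace = 1) :
    stddev A ρ * stddev B ρ ≥ (1 / 2) * ‖((A * B - B * A) * ρ).trace‖ := by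
  have hφ : traceExpectation hρ 1 = 1 := by rw [traceExpectation_apply, one_mul, hρtr]
  rw [← stateStdDev_traceExpectation hρ hA, ← stateStdDev_traceExpectation hρ hB]
  open scoped MatrixOrder Matrix.Norms.L2Operator in
  exact robertson_uncertainty_mixed_general hφ hA hB
end

section
/- Universal uncertainty principle (Ozawa's inequality, mixed-state matrix form): let A, B, N, D be Hermitian n×n complex matrices such that (A + N)(B + D) = (B + D)(A + N), and let ρ be a density matrix. Setting ε = (Tr[N²ρ])^{1/2} and η = (Tr[D²ρ])^{1/2}, one has ε·η + ε·σ(B;ρ) + σ(A;ρ)·η ≥ (1/2)·|Tr[(AB − BA)ρ]|. -/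
open ComplexOrder

/-!
Expanding the bracket `⁅A + N, B + D⁆` writes `⁅A, B⁆` as `⁅A + N, B + D⁆` minus the three cross
brackets `⁅N, D⁆`, `⁅N, B⁆` and `⁅A, D⁆`. The expectation of each cross bracket is bounded by
Robertson's inequality, which is the Cauchy–Schwarz inequality for the semi-inner product
`φ (star X * Y)` of a positive functional `φ`. Subtracting from `A` and `B` their expectations does
not change any bracket, and turns their root mean squares into standard deviations.
-/

section PositiveFunctional

variable {𝒜 : Type*} [Ring 𝒜] [Algebra ℂ 𝒜] {φ : 𝒜 →ₗ[ℂ] ℂ}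

/-- The root mean square of a self-adjoint element in the state `φ`; for the noise operators `N`
and `D` of Ozawa's inequality these are the error `ε` and the disturbance `η`. -/
noncomputable def rootMeanSquare (φ : 𝒜 →ₗ[ℂ] ℂ) (X : 𝒜) : ℝ :=
  √(φ (X * X)).re

/-- The standard deviation of a self-adjoint element in the state `φ`, whose expectation `φ X` is
real. -/
noncomputable def stdDev (φ : 𝒜 →ₗ[ℂ] ℂ) (X : 𝒜) : ℝ :=
  √((φ (X * X)).re - (φ X).re ^ 2)

theorem rootMeanSquare_sub_expectation (hφ_one : φ 1 = 1) (X : 𝒜) :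
    rootMeanSquare φ (X - ((φ X).re : ℂ) • 1) = stdDev φ X := by
  generalize ha : (φ X).re = a
  have expand : (X - (a : ℂ) • 1) * (X - (a : ℂ) • 1) =
      X * X - ((2 * a : ℝ) : ℂ) • X + ((a ^ 2 : ℝ) : ℂ) • 1 := by
    push_cast
    simp only [sub_mul, mul_sub, smul_mul_assoc, mul_smul_comm, one_mul, mul_one]
    module
  have variance : (φ ((X - (a : ℂ) • 1) * (X - (a : ℂ) • 1))).re = (φ (X * X)).re - a ^ 2 := by
    simp only [expand, map_add, map_sub, map_smul, hφ_one, smul_eq_mul, Complex.add_re,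
      Complex.sub_re, Complex.re_ofReal_mul, Complex.one_re, ha]
    ring
  rw [rootMeanSquare, stdDev, variance, ha]

theorem lie_sub_smul_one (X Y : 𝒜) (c : ℂ) : ⁅X, Y - c • 1⁆ = ⁅X, Y⁆ := by
  simp [Ring.lie_def, mul_sub, sub_mul]

theorem sub_smul_one_lie (X Y : 𝒜) (c : ℂ) : ⁅X - c • 1, Y⁆ = ⁅X, Y⁆ := by
  simp [Ring.lie_def, mul_sub, sub_mul]

variable [StarRing 𝒜]

/-- A positive linear functional on a complex *-algebra: an unnormalised state, sending each
observable to its expectation. Positivity is only asked on the elements `star X * X`, so that `𝒜`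
needs no order. -/
def IsPositiveFunctional (φ : 𝒜 →ₗ[ℂ] ℂ) : Prop :=
  ∀ X, 0 ≤ φ (star X * X)

variable [StarModule ℂ 𝒜]

theorem isSelfAdjoint_sub_ofReal_smul_one {X : 𝒜} (hX : IsSelfAdjoint X) (a : ℝ) :
    IsSelfAdjoint (X - (a : ℂ) • 1) :=
  hX.sub (.smul (Complex.conj_ofReal a) (.one 𝒜))

namespace IsPositiveFunctional

theorem map_star (hφ : IsPositiveFunctional φ) (X : 𝒜) : φ (star X) = star (φ X) := by
  -- `φ (star Y * Y)` is real for `Y = 1`, `X`, `X + 1` and `I • X + 1`; polarize.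
  have real (Y : 𝒜) : (φ (star Y * Y)).im = 0 := (hφ Y).2.symm
  have h_one : (φ 1).im = 0 := by simpa using real 1
  have h_add : (φ X).im + (φ (star X)).im = 0 := by
    simpa [add_mul, mul_add, real X, h_one] using real (X + 1)
  have h_I : (φ X).re - (φ (star X)).re = 0 := by
    simpa [add_mul, mul_add, smul_smul, real X, h_one, ← sub_eq_add_neg] using
      real (Complex.I • X + 1)
  apply Complex.ext
  · simp only [RCLike.star_def, Complex.conj_re]
    linarith
  · simp only [RCLike.star_def, Complex.conj_im]
    linarith

/-- The Gelfand–Naimark–Segal semi-inner product of a positive functional. -/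
abbrev preInnerProductCore (hφ : IsPositiveFunctional φ) : PreInnerProductSpace.Core ℂ 𝒜 where
  inner X Y := φ (star X * Y)
  conj_inner_symm X Y := by simp [← hφ.map_star, starRingEnd_apply]
  re_inner_nonneg X := (hφ X).1
  add_left X Y Z := by simp [add_mul]
  smul_left X Y c := by simp

theorem norm_map_mul_le (hφ : IsPositiveFunctional φ) {X Y : 𝒜} (hX : IsSelfAdjoint X)
    (hY : IsSelfAdjoint Y) : ‖φ (X * Y)‖ ≤ rootMeanSquare φ X * rootMeanSquare φ Y := by
  have cauchy_schwarz : ‖φ (star X * Y)‖ ≤ √(φ (star X * X)).re * √(φ (star Y * Y)).re :=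
    letI := hφ.preInnerProductCore
    InnerProductSpace.Core.norm_inner_le_norm X Y
  rwa [hX.star_eq, hY.star_eq] at cauchy_schwarz

theorem norm_map_lie_le (hφ : IsPositiveFunctional φ) {X Y : 𝒜} (hX : IsSelfAdjoint X)
    (hY : IsSelfAdjoint Y) :
    ‖φ ⁅X, Y⁆‖ ≤ 2 * (rootMeanSquare φ X * rootMeanSquare φ Y) := by
  have triangle : ‖φ ⁅X, Y⁆‖ ≤ ‖φ (X * Y)‖ + ‖φ (Y * X)‖ := by
    rw [Ring.lie_def, map_sub]
    exact norm_sub_le _ _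
  linarith [hφ.norm_map_mul_le hX hY, hφ.norm_map_mul_le hY hX]

end IsPositiveFunctional

theorem ozawa_inequality_mixed_general (hφ : IsPositiveFunctional φ) (hφ_one : φ 1 = 1)
    {A B N D : 𝒜} (hA : IsSelfAdjoint A) (hB : IsSelfAdjoint B) (hN : IsSelfAdjoint N)
    (hD : IsSelfAdjoint D) :
    1 / 2 * ‖φ ⁅A, B⁆‖ ≤
      rootMeanSquare φ N * rootMeanSquare φ D + rootMeanSquare φ N * stdDev φ B +
        stdDev φ A * rootMeanSquare φ D + 1 / 2 * ‖φ ⁅A + N, B + D⁆‖ := by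
  have expand : ⁅A, B⁆ = ⁅A + N, B + D⁆ - (⁅N, D⁆ + ⁅N, B⁆ + ⁅A, D⁆) := by
    simp only [Ring.lie_def]
    noncomm_ring
  have triangle : ‖φ ⁅A, B⁆‖ ≤ ‖φ ⁅A + N, B + D⁆‖ + (‖φ ⁅N, D⁆‖ + ‖φ ⁅N, B⁆‖ + ‖φ ⁅A, D⁆‖) := by
    rw [expand, map_sub, map_add, map_add]
    exact (norm_sub_le _ _).trans (by gcongr; exact norm_add₃_le)
  have hND := hφ.norm_map_lie_le hN hD
  have hNB := hφ.norm_map_lie_le hN (isSelfAdjoint_sub_ofReal_smul_one hB (φ B).re)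
  have hAD := hφ.norm_map_lie_le (isSelfAdjoint_sub_ofReal_smul_one hA (φ A).re) hD
  rw [lie_sub_smul_one, rootMeanSquare_sub_expectation hφ_one] at hNB
  rw [sub_smul_one_lie, rootMeanSquare_sub_expectation hφ_one] at hAD
  linarith

end PositiveFunctional

section DensityMatrix

variable {ι : Type*} [Fintype ι]

/-- The expectation functional `X ↦ Tr[Xρ]` of a density matrix `ρ`. -/
def traceFunctional (ρ : Matrix ι ι ℂ) : Matrix ι ι ℂ →ₗ[ℂ] ℂ :=
  Matrix.traceLinearMap ι ℂ ℂ ∘ₗ LinearMap.mulRight ℂ ρ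

theorem isPositiveFunctional_traceFunctional [DecidableEq ι] {ρ : Matrix ι ι ℂ}
    (hρ : ρ.PosSemidef) : IsPositiveFunctional (traceFunctional ρ) := fun X ↦
  calc
    0 ≤ (X * ρ * star X).trace := (hρ.mul_mul_conjTranspose_same X).trace_nonneg
    _ = (star X * X * ρ).trace := Matrix.trace_mul_cycle _ _ _

end DensityMatrix

/-- Universal uncertainty principle (Ozawa's inequality, mixed-state matrix form). -/
theorem ozawa_inequality_mixed {n : ℕ} (hn : 0 < n)
    (A B N D ρ : Matrix (Fin n) (Fin n) ℂ)
    (hA : A.IsHermitian) (hB : B.IsHermitian)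
    (hN : N.IsHermitian) (hD : D.IsHermitian)
    (hcomm : (A + N) * (B + D) = (B + D) * (A + N))
    (hρ : ρ.PosSemidef) (hρtr : ρ.trace = 1) :
    Real.sqrt ((N * N * ρ).trace.re) * Real.sqrt ((D * D * ρ).trace.re) +
        Real.sqrt ((N * N * ρ).trace.re) * stddev B ρ +
        stddev A ρ * Real.sqrt ((D * D * ρ).trace.re) ≥
      (1 / 2) * ‖((A * B - B * A) * ρ).trace‖ := by
  simpa [Ring.lie_def, hcomm, traceFunctional, rootMeanSquare, stdDev, stddev] using
    ozawa_inequality_mixed_general (isPositiveFunctional_traceFunctional hρ)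
      (by simpa [traceFunctional]) hA hB hN hD
end

section
/- Condition for the Heisenberg-type inequality: let A, B, N, D be Hermitian n×n complex matrices such that (A + N)(B + D) = (B + D)(A + N), and let ρ be a density matrix. Setting ε = (Tr[N²ρ])^{1/2} and η = (Tr[D²ρ])^{1/2}, one has ε·η + (1/2)·|Tr[(NB − BN)ρ] + Tr[(AD − DA)ρ]| ≥ (1/2)·|Tr[(AB − BA)ρ]|. -/
open ComplexOrder

/-! Since `A + N` and `B + D` commute, `[A, B] = -([N, B] + [A, D] + [N, D])`. The last commutator
is controlled by Cauchy–Schwarz for the semi-inner product `⟪X, Y⟫ = Tr[Y ρ Xᴴ]`: for Hermitian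
`N` and `D`, each of `Tr[N D ρ]` and `Tr[D N ρ]` is at most `(Tr[N² ρ] Tr[D² ρ])^{1/2}` in
modulus. -/

theorem commutator_eq_of_commute_add {R : Type*} [NonUnitalNonAssocRing R] {a b c d : R}
    (h : Commute (a + c) (b + d)) :
    a * b - b * a = -((c * b - b * c) + (a * d - d * a) + (c * d - d * c)) := by
  have h₀ : (a + c) * (b + d) - (b + d) * (a + c) = 0 := sub_eq_zero.mpr h.eq
  rw [eq_neg_iff_add_eq_zero, ← h₀]
  simp only [add_mul, mul_add]
  abel

section PosSemidef

open Matrix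

variable {𝕜 n : Type*} [RCLike 𝕜] [Fintype n] {ρ N D : Matrix n n 𝕜}

theorem norm_trace_conjTranspose_mul_mul_le (hρ : ρ.PosSemidef) (X Y : Matrix n n 𝕜) :
    ‖(Xᴴ * Y * ρ).trace‖ ≤
      √(RCLike.re (Xᴴ * X * ρ).trace) * √(RCLike.re (Yᴴ * Y * ρ).trace) := by
  let _ := ρ.toMatrixSeminormedAddCommGroup hρ
  let _ := ρ.toMatrixInnerProductSpace hρ
  have cauchy_schwarz : ‖(Y * ρ * Xᴴ).trace‖ ≤
      √(RCLike.re (X * ρ * Xᴴ).trace) * √(RCLike.re (Y * ρ * Yᴴ).trace) :=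
    norm_inner_le_norm (𝕜 := 𝕜) X Y
  rwa [trace_mul_cycle Y ρ Xᴴ, trace_mul_cycle X ρ Xᴴ, trace_mul_cycle Y ρ Yᴴ] at cauchy_schwarz

theorem norm_trace_mul_mul_le_of_isHermitian (hρ : ρ.PosSemidef) (hN : N.IsHermitian)
    (hD : D.IsHermitian) :
    ‖(N * D * ρ).trace‖ ≤
      √(RCLike.re (N * N * ρ).trace) * √(RCLike.re (D * D * ρ).trace) := by
  simpa only [hN.eq, hD.eq] using norm_trace_conjTranspose_mul_mul_le hρ N D

theorem norm_trace_commutator_mul_le (hρ : ρ.PosSemidef) (hN : N.IsHermitian)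
    (hD : D.IsHermitian) :
    ‖((N * D - D * N) * ρ).trace‖ ≤
      2 * (√(RCLike.re (N * N * ρ).trace) * √(RCLike.re (D * D * ρ).trace)) :=
  calc ‖((N * D - D * N) * ρ).trace‖
      = ‖(N * D * ρ).trace - (D * N * ρ).trace‖ := by rw [sub_mul, trace_sub]
    _ ≤ ‖(N * D * ρ).trace‖ + ‖(D * N * ρ).trace‖ := norm_sub_le _ _
    _ ≤ 2 * (√(RCLike.re (N * N * ρ).trace) * √(RCLike.re (D * D * ρ).trace)) := by
      linarith [norm_trace_mul_mul_le_of_isHermitian hρ hN hD,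
        norm_trace_mul_mul_le_of_isHermitian hρ hD hN]

theorem heisenberg_type_condition_general {A B : Matrix n n 𝕜} (hN : N.IsHermitian)
    (hD : D.IsHermitian) (hcomm : Commute (A + N) (B + D)) (hρ : ρ.PosSemidef) :
    (1 / 2) * ‖((A * B - B * A) * ρ).trace‖ ≤
      √(RCLike.re (N * N * ρ).trace) * √(RCLike.re (D * D * ρ).trace) +
        (1 / 2) * ‖((N * B - B * N) * ρ).trace + ((A * D - D * A) * ρ).trace‖ := by
  have htrace : ‖((A * B - B * A) * ρ).trace‖ ≤
      ‖((N * B - B * N) * ρ).trace + ((A * D - D * A) * ρ).trace‖ +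
        ‖((N * D - D * N) * ρ).trace‖ := by
    rw [commutator_eq_of_commute_add hcomm, neg_mul, trace_neg, norm_neg, add_mul, add_mul,
      trace_add, trace_add]
    exact norm_add_le _ _
  linarith [norm_trace_commutator_mul_le hρ hN hD]

end PosSemidef

/-- Condition for the Heisenberg-type inequality. -/
theorem heisenberg_type_condition {n : ℕ} (hn : 0 < n)
    (A B N D ρ : Matrix (Fin n) (Fin n) ℂ)
    (hA : A.IsHermitian) (hB : B.IsHermitian)
    (hN : N.IsHermitian) (hD : D.IsHermitian)
    (hcomm : (A + N) * (B + D) = (B + D) * (A + N))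
    (hρ : ρ.PosSemidef) (hρtr : ρ.trace = 1) :
    Real.sqrt ((N * N * ρ).trace.re) * Real.sqrt ((D * D * ρ).trace.re) +
        (1 / 2) * ‖((N * B - B * N) * ρ).trace + ((A * D - D * A) * ρ).trace‖ ≥
      (1 / 2) * ‖((A * B - B * A) * ρ).trace‖ :=
  heisenberg_type_condition_general hN hD hcomm hρ
end

section
/- Constraint for error-free measurements: let A, B, N, D be Hermitian n×n complex matrices such that (A + N)(B + D) = (B + D)(A + N), and let ρ be a density matrix with Tr[N²ρ] = 0 (the error in measuring A vanishes). Then σ(A;ρ)·(Tr[D²ρ])^{1/2} ≥ (1/2)·|Tr[(AB − BA)ρ]|. -/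
open ComplexOrder

/-!
The expectation `X ↦ Tr[Xρ]` is a positive linear functional `φ`, so `(a, b) ↦ φ (a⋆ b)` is a
semi-inner product. If `φ (N²) = 0`, then `N` is a null vector and Cauchy–Schwarz makes `φ` vanish
on every product having `N` as its first or last factor. Expanding `0 = ⁅A + N, B + D⁆` under `φ`
therefore leaves `φ ⁅A, B⁆ = -φ ⁅A, D⁆`, and the right-hand side is bounded by Robertson's argument:
replacing `A` by `A - φ A` does not change the commutator, and each of the two products in it is
controlled by Cauchy–Schwarz.
-/

section PositiveFunctional

variable {E : Type*} [NonUnitalRing E] [StarRing E] [PartialOrder E] [StarOrderedRing E]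
  [SelfAdjointDecompose E] [Module ℂ E] [StarModule ℂ E] [IsScalarTower ℂ E E] (φ : E →ₚ[ℂ] ℂ)

/-- The semi-inner product `⟪a, b⟫ = φ (a⋆ b)` of the Gelfand–Naimark–Segal construction, the source
of the Cauchy–Schwarz inequality for `φ`. Mathlib's `PositiveLinearMap.PreGNS` provides it for
C⋆-algebras only. -/
abbrev gnsCore : PreInnerProductSpace.Core ℂ E where
  inner a b := φ (star a * b)
  conj_inner_symm a b := by simp [← Complex.star_def, ← map_star φ]
  re_inner_nonneg a := (RCLike.nonneg_iff.mp (φ.map_nonneg (star_mul_self_nonneg a))).1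
  add_left a b c := by rw [star_add, add_mul, map_add]
  smul_left a b r := by simp [smul_mul_assoc]

theorem norm_map_star_mul_le (a b : E) :
    ‖φ (star a * b)‖ ≤ √(φ (star a * a)).re * √(φ (star b * b)).re :=
  letI := gnsCore φ
  letI := InnerProductSpace.Core.toNorm (𝕜 := ℂ) (F := E)
  InnerProductSpace.Core.norm_inner_le_norm (𝕜 := ℂ) a b

variable {φ}

theorem map_star_mul_eq_zero_of_null_left {a : E} (ha : φ (star a * a) = 0) (b : E) :
    φ (star a * b) = 0 := by
  simpa [ha] using norm_map_star_mul_le φ a b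

theorem map_mul_eq_zero_of_null_right {a : E} (ha : φ (star a * a) = 0) (b : E) :
    φ (b * a) = 0 := by
  simpa [ha] using norm_map_star_mul_le φ (star b) a

theorem map_lie_eq_zero_of_null {a : E} (ha : IsSelfAdjoint a) (hnull : φ (a * a) = 0) (b : E) :
    φ ⁅a, b⁆ = 0 := by
  have hstar : φ (star a * a) = 0 := by rwa [ha.star_eq]
  have hab : φ (a * b) = 0 := by
    simpa only [ha.star_eq] using map_star_mul_eq_zero_of_null_left hstar b
  rw [Ring.lie_def, map_sub, hab, map_mul_eq_zero_of_null_right hstar b, sub_zero]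

theorem map_lie_eq_neg_of_commute_add {A B N D : E} (hN : IsSelfAdjoint N)
    (herr : φ (N * N) = 0) (hcomm : Commute (A + N) (B + D)) :
    φ ⁅A, B⁆ = -φ ⁅A, D⁆ := by
  have hexpand : ⁅A, B⁆ + ⁅A, D⁆ + ⁅N, B + D⁆ = 0 := by
    rw [← hcomm.lie_eq]
    simp only [Ring.lie_def, add_mul, mul_add]
    abel
  have hmap := congrArg φ hexpand
  rw [map_add, map_add, map_lie_eq_zero_of_null hN herr, add_zero, map_zero] at hmap
  exact eq_neg_of_add_eq_zero_left hmap

theorem norm_map_mul_le {a b : E} (ha : IsSelfAdjoint a) (hb : IsSelfAdjoint b) :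
    ‖φ (a * b)‖ ≤ √(φ (a * a)).re * √(φ (b * b)).re := by
  simpa only [ha.star_eq, hb.star_eq] using norm_map_star_mul_le φ a b

theorem norm_map_lie_le {a b : E} (ha : IsSelfAdjoint a) (hb : IsSelfAdjoint b) :
    ‖φ ⁅a, b⁆‖ ≤ 2 * (√(φ (a * a)).re * √(φ (b * b)).re) :=
  calc ‖φ ⁅a, b⁆‖ = ‖φ (a * b) - φ (b * a)‖ := by rw [Ring.lie_def, map_sub]
    _ ≤ ‖φ (a * b)‖ + ‖φ (b * a)‖ := norm_sub_le _ _
    _ ≤ √(φ (a * a)).re * √(φ (b * b)).re + √(φ (b * b)).re * √(φ (a * a)).re :=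
      add_le_add (norm_map_mul_le ha hb) (norm_map_mul_le hb ha)
    _ = 2 * (√(φ (a * a)).re * √(φ (b * b)).re) := by ring

end PositiveFunctional

theorem lie_sub_algebraMap {R E : Type*} [CommSemiring R] [Ring E] [Algebra R E] (a b : E) (r : R) :
    ⁅a - algebraMap R E r, b⁆ = ⁅a, b⁆ := by
  rw [Ring.lie_def, Ring.lie_def, sub_mul, mul_sub, Algebra.commutes]
  abel

section State

variable {E : Type*} [Ring E] [PartialOrder E] [Algebra ℂ E]

/-- The standard deviation of a self-adjoint `a` in the state `φ`. Since `φ` is real on self-adjoint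
elements, taking real parts loses nothing; for other `a` the value has no meaning. -/
noncomputable def standardDeviation (φ : E →ₚ[ℂ] ℂ) (a : E) : ℝ :=
  √((φ (a * a)).re - (φ a).re ^ 2)

variable {φ : E →ₚ[ℂ] ℂ}

theorem standardDeviation_eq_sqrt_centered (hφ : φ 1 = 1) (a : E) :
    standardDeviation φ a =
      √(φ ((a - algebraMap ℂ E (φ a).re) * (a - algebraMap ℂ E (φ a).re))).re := by
  rw [standardDeviation]
  congr 1
  simp only [Algebra.algebraMap_eq_smul_one, sub_mul, mul_sub, smul_mul_assoc, mul_smul_comm,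
    one_mul, mul_one, map_sub, map_smul, hφ, smul_eq_mul, Complex.sub_re, Complex.re_ofReal_mul,
    Complex.ofReal_re]
  ring

variable [StarRing E] [StarOrderedRing E] [SelfAdjointDecompose E] [StarModule ℂ E]

theorem norm_map_lie_le_standardDeviation (hφ : φ 1 = 1) {a b : E} (ha : IsSelfAdjoint a)
    (hb : IsSelfAdjoint b) :
    ‖φ ⁅a, b⁆‖ ≤ 2 * (standardDeviation φ a * √(φ (b * b)).re) := by
  have hcentered : IsSelfAdjoint (a - algebraMap ℂ E (φ a).re) :=
    ha.sub (.algebraMap E (Complex.conj_ofReal _))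
  rw [standardDeviation_eq_sqrt_centered hφ, ← lie_sub_algebraMap a b ((φ a).re : ℂ)]
  exact norm_map_lie_le hcentered hb

theorem errorfree_constraint_general (hφ : φ 1 = 1) {A B N D : E} (hA : IsSelfAdjoint A)
    (hN : IsSelfAdjoint N) (hD : IsSelfAdjoint D) (hcomm : Commute (A + N) (B + D))
    (herr : φ (N * N) = 0) :
    1 / 2 * ‖φ ⁅A, B⁆‖ ≤ standardDeviation φ A * √(φ (D * D)).re := by
  rw [map_lie_eq_neg_of_commute_add hN herr hcomm, norm_neg]
  linarith [norm_map_lie_le_standardDeviation hφ hA hD]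

end State

section Matrix

open scoped MatrixOrder

variable {n : Type*} [Fintype n]

theorem trace_mul_nonneg_of_posSemidef_s8 {𝕜 : Type*} [RCLike 𝕜] {X Y : Matrix n n 𝕜}
    (hX : X.PosSemidef) (hY : Y.PosSemidef) : 0 ≤ (X * Y).trace := by
  classical
  obtain ⟨C, rfl⟩ := CStarAlgebra.nonneg_iff_eq_star_mul_self.mp hX.nonneg
  rw [Matrix.star_eq_conjTranspose, Matrix.mul_assoc, Matrix.trace_mul_comm]
  exact (hY.mul_mul_conjTranspose_same C).trace_nonneg

/-- The expectation functional `X ↦ Tr[Xρ]` of a positive semidefinite `ρ`. It is a state when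
`Tr[ρ] = 1`. -/
noncomputable def expectation {ρ : Matrix n n ℂ} (hρ : ρ.PosSemidef) : Matrix n n ℂ →ₚ[ℂ] ℂ :=
  .mk₀ (Matrix.traceLinearMap n ℂ ℂ ∘ₗ LinearMap.mulRight ℂ ρ) fun _ hX ↦
    trace_mul_nonneg_of_posSemidef_s8 (Matrix.nonneg_iff_posSemidef.mp hX) hρ

theorem expectation_apply {ρ : Matrix n n ℂ} (hρ : ρ.PosSemidef) (X : Matrix n n ℂ) :
    expectation hρ X = (X * ρ).trace := rfl

end Matrix

open scoped MatrixOrder in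
theorem stddev_eq_standardDeviation {n : ℕ} {ρ : Matrix (Fin n) (Fin n) ℂ} (hρ : ρ.PosSemidef)
    (A : Matrix (Fin n) (Fin n) ℂ) : stddev A ρ = standardDeviation (expectation hρ) A := rfl

/-- Constraint for error-free measurements. -/
theorem errorfree_constraint {n : ℕ} (hn : 0 < n)
    (A B N D ρ : Matrix (Fin n) (Fin n) ℂ)
    (hA : A.IsHermitian) (hB : B.IsHermitian)
    (hN : N.IsHermitian) (hD : D.IsHermitian)
    (hcomm : (A + N) * (B + D) = (B + D) * (A + N))
    (hρ : ρ.PosSemidef) (hρtr : ρ.trace = 1)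
    (herr : (N * N * ρ).trace = 0) :
    stddev A ρ * Real.sqrt ((D * D * ρ).trace.re) ≥
      (1 / 2) * ‖((A * B - B * A) * ρ).trace‖ := by
  have hnorm : expectation hρ 1 = 1 := by rw [expectation_apply, Matrix.one_mul, hρtr]
  rw [stddev_eq_standardDeviation hρ]
  open scoped MatrixOrder in
  exact errorfree_constraint_general hnorm hA hN hD hcomm herr
end

section
/- Realization theorem for instruments (finite-dimensional case): let X be a nonempty finite set and {I_x}_{x∈X} a family of linear maps on n×n complex matrices such that each I_x is completely positive and Σ_{x∈X} Tr[I_x(ρ)] = Tr[ρ] for all matrices ρ. Then there exist a positive integer m, a unit vector ξ ∈ ℂᵐ, a unitary nm×nm complex matrix U (acting on ℂⁿ ⊗ ℂᵐ via the Kronecker product), and a family {P_x}_{x∈X} of Hermitian m×m matrices with P_x² = P_x, P_x P_y = 0 for x ≠ y, and Σ_{x∈X} P_x = I, such that for all n×n matrices ρ and all x ∈ X: I_x(ρ) = Tr_K[(I⊗P_x)·U(ρ⊗|ξ⟩⟨ξ|)U†]. -/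
/-!
By Choi's theorem every `I x` has a Kraus form `ρ ↦ ∑ a, K a * ρ * (K a)ᴴ`. Take a basis of the
ancilla indexed by all Kraus operators of all the `I x`; stacking them gives
`V : ℂⁿ → ℂⁿ ⊗ ℂᵐ`, which is an isometry because `∑ x, I x` preserves the trace. Measuring in the
ancilla basis which outcome `x` a Kraus operator belongs to recovers `I x`. Finally, `V` is
completed to a unitary `U` with `U (v ⊗ ξ) = V v` for a fixed basis vector `ξ`.
-/

open ComplexOrder Kronecker Matrix

/-- The Choi matrix of a linear map on `n×n` matrices: the entry at
`((i,k),(j,l))` is `(Φ(E_{ij}))_{kl}`. -/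
noncomputable def choiMatrix {n : ℕ}
    (Φ : Matrix (Fin n) (Fin n) ℂ →ₗ[ℂ] Matrix (Fin n) (Fin n) ℂ) :
    Matrix (Fin n × Fin n) (Fin n × Fin n) ℂ :=
  Matrix.of fun p q => (Φ (Matrix.single p.1 q.1 1)) p.2 q.2

/-- A linear map on matrices is completely positive if its Choi matrix is
positive semidefinite. -/
def IsCompletelyPositive {n : ℕ}
    (Φ : Matrix (Fin n) (Fin n) ℂ →ₗ[ℂ] Matrix (Fin n) (Fin n) ℂ) : Prop :=
  (choiMatrix Φ).PosSemidef

/-- The rank-one projection `|ξ⟩⟨ξ|` onto a vector `ξ`. -/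
noncomputable def rankOneProj {m : ℕ} (ξ : Fin m → ℂ) : Matrix (Fin m) (Fin m) ℂ :=
  Matrix.vecMulVec ξ (star ξ)

/-- The partial trace over the second tensor factor. -/
noncomputable def trK {n m : ℕ} (X : Matrix (Fin n × Fin m) (Fin n × Fin m) ℂ) :
    Matrix (Fin n) (Fin n) ℂ :=
  Matrix.of fun i j => ∑ k, X (i, k) (j, k)

section OrthonormalColumns

variable {ι κ 𝕜 : Type*} [Fintype ι] [DecidableEq κ] [RCLike 𝕜]

theorem orthonormal_toLp_col_iff {A : Matrix ι κ 𝕜} :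
    Orthonormal 𝕜 (fun j => WithLp.toLp 2 (A.col j)) ↔ Aᴴ * A = 1 := by
  simp only [orthonormal_iff_ite, EuclideanSpace.inner_toLp_toLp, ← Matrix.ext_iff, one_apply]
  refine forall₂_congr fun i j => ?_
  rw [dotProduct_comm]
  rfl

theorem exists_mem_unitaryGroup_submatrix_eq [DecidableEq ι] {f : κ → ι}
    (hf : Function.Injective f) {V : Matrix ι κ 𝕜} (hV : Vᴴ * V = 1) :
    ∃ U ∈ unitaryGroup ι 𝕜, U.submatrix id f = V := by
  let v : ι → EuclideanSpace 𝕜 ι := Function.extend f (fun j => WithLp.toLp 2 (V.col j)) 0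
  have v_apply (j : κ) : v (f j) = WithLp.toLp 2 (V.col j) := hf.extend_apply _ _ j
  have hv : Orthonormal 𝕜 ((Set.range f).domRestrict v) := by
    convert (orthonormal_toLp_col_iff.2 hV).comp _ (Set.rangeSplitting_injective f) using 1
    ext1 i
    rw [Function.comp_apply, ← v_apply, Set.apply_rangeSplitting f, Set.domRestrict_apply]
  obtain ⟨b, hb⟩ := hv.exists_orthonormalBasis_extension_of_card_eq finrank_euclideanSpace
  refine ⟨of fun i j => b j i, mem_unitaryGroup_iff'.2 (orthonormal_toLp_col_iff.1 b.orthonormal),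
    ?_⟩
  ext i j
  change b (f j) i = V i j
  rw [hb _ (Set.mem_range_self j), v_apply]
  rfl

end OrthonormalColumns

section Dilation

variable {ι κ n R : Type*}

/-- The Stinespring operator `v ↦ ∑ a, K a v ⊗ e_a` of a family of Kraus operators, with the
ancilla as second tensor factor: the matrices `K a` stacked on top of each other. -/
def stinespring (K : ι → Matrix n κ R) : Matrix (n × ι) κ R :=
  of fun p j => K p.2 p.1 j

theorem stinespring_mul_mul_conjTranspose_submatrix [Fintype κ] [NonUnitalSemiring R] [Star R]
    (K : ι → Matrix n κ R) (ρ : Matrix κ κ R) (a b : ι) :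
    (stinespring K * ρ * (stinespring K)ᴴ).submatrix (·, a) (·, b) = K a * ρ * (K b)ᴴ :=
  rfl

theorem stinespring_conjTranspose_mul_self [Fintype ι] [Fintype n] [NonUnitalSemiring R] [Star R]
    (K : ι → Matrix n κ R) :
    (stinespring K)ᴴ * stinespring K = ∑ a, (K a)ᴴ * K a := by
  ext i j
  simp only [stinespring, mul_apply, conjTranspose_apply, of_apply, Matrix.sum_apply,
    Fintype.sum_prod_type_right]

theorem sum_conjTranspose_mul_self_eq_one [Fintype ι] [Fintype n] [Fintype κ] [DecidableEq κ]
    [CommSemiring R] [Star R] {K : ι → Matrix n κ R}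
    (hK : ∀ ρ : Matrix κ κ R, (∑ a, K a * ρ * (K a)ᴴ).trace = ρ.trace) : ∑ a, (K a)ᴴ * K a = 1 := by
  refine ext_iff_trace_mul_right.2 fun ρ => ?_
  rw [Matrix.one_mul, ← hK ρ]
  simp only [Matrix.sum_mul, trace_sum, trace_mul_cycle _ ρ]

theorem mul_kronecker_single_mul {l o : Type*} [Fintype n] [Fintype ι] [DecidableEq ι] [Semiring R]
    (U : Matrix l (n × ι) R) (ρ : Matrix n n R) (z : ι) (U' : Matrix (n × ι) o R) :
    U * (ρ ⊗ₖ single z z 1) * U' = U.submatrix id (·, z) * ρ * U'.submatrix (·, z) id := by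
  ext p q
  simp [mul_apply, Fintype.sum_prod_type, single_apply, ite_and]

theorem rankOneProj_single {m : ℕ} (z : Fin m) : rankOneProj (Pi.single z 1) = single z z 1 := by
  rw [rankOneProj, single_eq_single_vecMulVec_single, ← Pi.single_star, star_one]

end Dilation

section FiberProj

variable {ι X R : Type*} [DecidableEq ι] [DecidableEq X]

variable (R) in
/-- The coordinate projection onto the span of the basis vectors `e_i` with `f i = x`: the
projective measurement, in the standard basis, of the label `f`. -/
def fiberProj [Zero R] [One R] (f : ι → X) (x : X) : Matrix ι ι R :=
  diagonal fun i => if f i = x then 1 else 0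

theorem isStarProjection_fiberProj [Fintype ι] [Semiring R] [StarRing R] (f : ι → X) (x : X) :
    IsStarProjection (fiberProj R f x) where
  isIdempotentElem := by simp +contextual [IsIdempotentElem, fiberProj]
  isSelfAdjoint := isHermitian_diagonal_iff.2 fun i => by
    split_ifs
    exacts [.one R, .zero R]

theorem fiberProj_mul_of_ne [Fintype ι] [NonAssocSemiring R] (f : ι → X) {x y : X} (hxy : x ≠ y) :
    fiberProj R f x * fiberProj R f y = 0 := by
  rw [fiberProj, fiberProj, diagonal_mul_diagonal, diagonal_eq_zero]
  ext i
  by_cases hi : f i = x <;> simp [hi, hxy]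

theorem sum_fiberProj [Fintype X] [NonAssocSemiring R] (f : ι → X) :
    ∑ x, fiberProj R f x = 1 := by
  ext i j
  by_cases hij : i = j <;> simp [fiberProj, Matrix.sum_apply, one_apply, hij]

theorem trK_one_kronecker_fiberProj_mul {n m : ℕ} (f : Fin m → X) (x : X)
    (Y : Matrix (Fin n × Fin m) (Fin n × Fin m) ℂ) :
    trK ((1 ⊗ₖ fiberProj ℂ f x) * Y) = ∑ a with f a = x, Y.submatrix (·, a) (·, a) := by
  ext i j
  simp only [trK, fiberProj, ← diagonal_one, diagonal_kronecker_diagonal, diagonal_mul, of_apply,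
    Matrix.sum_apply, submatrix_apply, Finset.sum_filter, one_mul, ite_mul, zero_mul]

end FiberProj

section Kraus

variable {n : ℕ}

theorem map_apply_eq_sum_choiMatrix (Φ : Matrix (Fin n) (Fin n) ℂ →ₗ[ℂ] Matrix (Fin n) (Fin n) ℂ)
    (ρ : Matrix (Fin n) (Fin n) ℂ) (k l : Fin n) :
    Φ ρ k l = ∑ i, ∑ j, ρ i j * choiMatrix Φ (i, k) (j, l) := by
  have map_single (i j : Fin n) : Φ (single i j (ρ i j)) = ρ i j • Φ (single i j 1) := by
    rw [← map_smul, smul_single, smul_eq_mul, mul_one]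
  conv_lhs => rw [matrix_eq_sum_single ρ]
  simp only [map_sum, map_single, Matrix.sum_apply, Matrix.smul_apply, smul_eq_mul, choiMatrix,
    of_apply]

open scoped MatrixOrder in
theorem IsCompletelyPositive.exists_kraus
    {Φ : Matrix (Fin n) (Fin n) ℂ →ₗ[ℂ] Matrix (Fin n) (Fin n) ℂ} (hΦ : IsCompletelyPositive Φ) :
    ∃ K : Fin n × Fin n → Matrix (Fin n) (Fin n) ℂ, ∀ ρ, Φ ρ = ∑ a, K a * ρ * (K a)ᴴ := by
  obtain ⟨B, hB⟩ : ∃ B, choiMatrix Φ = Bᴴ * B :=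
    CStarAlgebra.nonneg_iff_eq_star_mul_self.1 (PosSemidef.nonneg hΦ)
  -- The Kraus operators are the rows of `B`, conjugated and reshaped into matrices.
  refine ⟨fun a => of fun k i => star (B a (i, k)), fun ρ => ?_⟩
  ext k l
  calc Φ ρ k l
      = ∑ i, ∑ j, ∑ a, star (B a (i, k)) * ρ i j * B a (j, l) := by
        simp only [map_apply_eq_sum_choiMatrix, hB, mul_apply, conjTranspose_apply, Finset.mul_sum,
          mul_left_comm, mul_assoc]
    _ = ∑ a, ∑ j, ∑ i, star (B a (i, k)) * ρ i j * B a (j, l) := by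
        rw [Finset.sum_comm, Finset.sum_comm_cycle]
    _ = _ := by
        simp only [Matrix.sum_apply, mul_apply, conjTranspose_apply, of_apply, star_star,
          Finset.sum_mul]

theorem exists_labelled_kraus {X : Type*} [Finite X] [DecidableEq X]
    {I : X → (Matrix (Fin n) (Fin n) ℂ →ₗ[ℂ] Matrix (Fin n) (Fin n) ℂ)}
    (hI : ∀ x, IsCompletelyPositive (I x)) :
    ∃ (m : ℕ) (f : Fin m → X) (K : Fin m → Matrix (Fin n) (Fin n) ℂ),
      ∀ x ρ, I x ρ = ∑ a with f a = x, K a * ρ * (K a)ᴴ := by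
  choose K hK using fun x => (hI x).exists_kraus
  obtain ⟨m, ⟨e⟩⟩ := Finite.exists_equiv_fin (X × (Fin n × Fin n))
  refine ⟨m, fun a => (e.symm a).1, fun a => K (e.symm a).1 (e.symm a).2, fun x ρ => ?_⟩
  rw [hK]
  refine Finset.sum_nbij' (fun b => e (x, b)) (fun a => (e.symm a).2) (by simp) (by simp) (by simp)
    (fun a ha => ?_) (by simp)
  rw [← (Finset.mem_filter.1 ha).2]
  exact e.apply_symm_apply a

end Kraus

/-- Realization theorem for instruments (finite-dimensional case). -/
theorem instrument_realization {n : ℕ} (hn : 0 < n)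
    (X : Type*) [Fintype X] [DecidableEq X] [Nonempty X]
    (I : X → (Matrix (Fin n) (Fin n) ℂ →ₗ[ℂ] Matrix (Fin n) (Fin n) ℂ))
    (hCP : ∀ x, IsCompletelyPositive (I x))
    (htr : ∀ ρ : Matrix (Fin n) (Fin n) ℂ, ∑ x, (I x ρ).trace = ρ.trace) :
    ∃ (m : ℕ) (_ : 0 < m) (ξ : Fin m → ℂ)
      (U : Matrix (Fin n × Fin m) (Fin n × Fin m) ℂ)
      (P : X → Matrix (Fin m) (Fin m) ℂ),
      star ξ ⬝ᵥ ξ = 1 ∧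
      U * Uᴴ = 1 ∧ Uᴴ * U = 1 ∧
      (∀ x, (P x).IsHermitian) ∧
      (∀ x, P x * P x = P x) ∧
      (∀ x y, x ≠ y → P x * P y = 0) ∧
      (∑ x, P x) = 1 ∧
      ∀ (ρ : Matrix (Fin n) (Fin n) ℂ) (x : X),
        I x ρ = trK (((1 : Matrix (Fin n) (Fin n) ℂ) ⊗ₖ P x) *
          (U * (ρ ⊗ₖ rankOneProj ξ) * Uᴴ)) := by
  obtain ⟨m, f, K, hK⟩ := exists_labelled_kraus hCP
  have hK_sum : ∑ a, (K a)ᴴ * K a = 1 := sum_conjTranspose_mul_self_eq_one fun ρ => by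
    rw [← htr ρ, ← trace_sum, ← Finset.sum_fiberwise _ f]
    simp only [hK]
  have hm : 0 < m := by
    have : NeZero n := ⟨hn.ne'⟩
    refine Nat.pos_of_ne_zero fun hm => ?_
    subst hm
    exact zero_ne_one hK_sum
  let z : Fin m := ⟨0, hm⟩
  obtain ⟨U, hU, hUV⟩ := exists_mem_unitaryGroup_submatrix_eq (Prod.mk_left_injective z)
    ((stinespring_conjTranspose_mul_self K).trans hK_sum)
  refine ⟨m, hm, Pi.single z 1, U, fiberProj ℂ f, by simp, mem_unitaryGroup_iff.1 hU,
    mem_unitaryGroup_iff'.1 hU, fun x => (isStarProjection_fiberProj f x).isSelfAdjoint,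
    fun x => (isStarProjection_fiberProj f x).isIdempotentElem,
    fun _ _ => fiberProj_mul_of_ne f, sum_fiberProj f, fun ρ x => ?_⟩
  rw [rankOneProj_single, mul_kronecker_single_mul, ← conjTranspose_submatrix, hUV,
    trK_one_kronecker_fiberProj_mul, hK]
  simp only [stinespring_mul_mul_conjTranspose_submatrix]
end

section
/- Characterization of simultaneous measurement by the POVM: let (ℂᵐ, ξ, U, M) be a finite-dimensional measuring process for ℂⁿ, let A and B be Hermitian n×n matrices, let f, g : ℝ → ℝ, and let ρ be a density matrix on ℂⁿ. Define the POVM of the measuring process by Π_y = Tr_K[U†(I⊗P^M_y)U·(I⊗|ξ⟩⟨ξ|)] for y ∈ ℝ. Then the measuring process simultaneously measures A and B with f and g in ρ — that is, U†(I⊗f(M))U ≡_{ρ⊗|ξ⟩⟨ξ|} A⊗I and U†(I⊗g(M))U ≡_{ρ⊗|ξ⟩⟨ξ|} B⊗I — if and only if for every pair of disjoint finite subsets Δ, Γ of ℝ: Tr[(Σ_{y: f(y)∈Δ} Π_y)·(Σ_{a∈Γ} P^A_a)·ρ] = 0 and Tr[(Σ_{y: g(y)∈Δ} Π_y)·(Σ_{b∈Γ}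 P^B_b)·ρ] = 0. -/
open ComplexOrder Kronecker Matrix

variable {ι : Type*} [Fintype ι] [DecidableEq ι]

/-- The spectral projection `P^C_x` of a Hermitian matrix `C` at `x ∈ ℝ`:
the orthogonal projection onto the eigenspace `ker(C − xI)` (the zero matrix
if `x` is not an eigenvalue, and junk value `0` if `C` is not Hermitian). -/
noncomputable def specProj (C : Matrix ι ι ℂ) (x : ℝ) : Matrix ι ι ℂ :=
  if h : C.IsHermitian then
    (h.eigenvectorUnitary : Matrix ι ι ℂ) *
      Matrix.diagonal (fun i => if h.eigenvalues i = x then (1 : ℂ) else 0) *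
      star (h.eigenvectorUnitary : Matrix ι ι ℂ)
  else 0

/-- The finite set of eigenvalues of a Hermitian matrix. -/
noncomputable def eigFinset (C : Matrix ι ι ℂ) : Finset ℝ :=
  if h : C.IsHermitian then Finset.univ.image h.eigenvalues else ∅

/-- The function `f(C) = Σ_x f(x)·P^C_x`, summing over the eigenvalues of `C`. -/
noncomputable def matFun (f : ℝ → ℝ) (C : Matrix ι ι ℂ) : Matrix ι ι ℂ :=
  ∑ x ∈ eigFinset C, (f x : ℂ) • specProj C x

/-- Two Hermitian matrices `C` and `D` are commuting in the state `τ` if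
`(P^C_x P^D_y − P^D_y P^C_x)·τ = 0` for all `x, y ∈ ℝ`. -/
def CommutingIn (C D τ : Matrix ι ι ℂ) : Prop :=
  ∀ x y : ℝ, (specProj C x * specProj D y - specProj D y * specProj C x) * τ = 0

/-- `C` and `D` have a quantum identical correlation in `τ` (written `C ≡_τ D`)
if they are commuting in `τ` and the joint probability distribution
`μ(x,y) = Tr[P^C_x P^D_y τ]` satisfies `Σ_x μ(x,x) = 1`. -/
def QIC (C D τ : Matrix ι ι ℂ) : Prop :=
  CommutingIn C D τ ∧
    (∑ x ∈ eigFinset C, (specProj C x * specProj D x * τ).trace) = 1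

/-- The POVM element `Π_y = Tr_K[U†(I⊗P^M_y)U·(I⊗|ξ⟩⟨ξ|)]` of a measuring process. -/
noncomputable def povmOf {n m : ℕ} (U : Matrix (Fin n × Fin m) (Fin n × Fin m) ℂ)
    (M : Matrix (Fin m) (Fin m) ℂ) (ξ : Fin m → ℂ) (y : ℝ) : Matrix (Fin n) (Fin n) ℂ :=
  trK (Uᴴ * ((1 : Matrix (Fin n) (Fin n) ℂ) ⊗ₖ specProj M y) * U *
    ((1 : Matrix (Fin n) (Fin n) ℂ) ⊗ₖ rankOneProj ξ))

/-! Two projective measurements `P`, `Q` satisfy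
`∑ x, Tr[(P x - Q x) τ (P x - Q x)ᴴ] = 2 Tr τ - 2 Re ∑ x, Tr[P x Q x τ]`, with nonnegative
summands on the left. Hence the joint distribution is concentrated on the diagonal exactly when
`P x τ = Q x τ` for all `x`, and this already forces the measurements to commute in `τ`. An
identical correlation is therefore the vanishing of all off-diagonal traces `Tr[P x Q y τ]`.
The functional calculus commutes with the star homomorphisms `X ↦ U†(I ⊗ X)U` and `X ↦ X ⊗ I`,
which turns those traces for a measuring process into traces against the POVM. -/

section TraceForm

variable {κ : Type*} [Fintype κ]

open scoped MatrixOrder Matrix.Norms.L2Operator in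
theorem trace_mul_mul_conjTranspose_eq_zero_iff {𝕜 l : Type*} [RCLike 𝕜] [Fintype l]
    {τ : Matrix κ κ 𝕜} (hτ : τ.PosSemidef) (X : Matrix l κ 𝕜) :
    (X * τ * Xᴴ).trace = 0 ↔ X * τ = 0 := by
  classical
  refine ⟨fun h => ?_, fun h => by simp [h]⟩
  obtain ⟨R, rfl⟩ := CStarAlgebra.nonneg_iff_eq_star_mul_self.mp hτ.nonneg
  rw [star_eq_conjTranspose] at h ⊢
  have hR : X * Rᴴ = 0 := by
    rw [← trace_mul_conjTranspose_self_eq_zero_iff, ← h]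
    simp only [conjTranspose_mul, conjTranspose_conjTranspose, Matrix.mul_assoc]
  rw [← Matrix.mul_assoc, hR, Matrix.zero_mul]

theorem star_trace_mul_mul_of_isHermitian {R : Type*} [CommSemiring R] [StarRing R]
    {P Q τ : Matrix κ κ R} (hP : P.IsHermitian) (hQ : Q.IsHermitian) (hτ : τ.IsHermitian) :
    star (P * Q * τ).trace = (Q * P * τ).trace := by
  rw [← trace_conjTranspose, conjTranspose_mul, conjTranspose_mul, hP.eq, hQ.eq, hτ.eq,
    trace_mul_comm]

theorem trace_sub_mul_mul_conjTranspose_of_isStarProjection {R : Type*} [CommRing R]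
    [StarRing R] {P Q : Matrix κ κ R} (hP : IsStarProjection P) (hQ : IsStarProjection Q)
    (τ : Matrix κ κ R) :
    ((P - Q) * τ * (P - Q)ᴴ).trace =
      (P * τ).trace + (Q * τ).trace - (P * Q * τ).trace - (Q * P * τ).trace := by
  have hsq : (P - Q)ᴴ * (P - Q) = P + Q - P * Q - Q * P := by
    rw [← star_eq_conjTranspose, (hP.isSelfAdjoint.sub hQ.isSelfAdjoint).star_eq,
      Matrix.sub_mul, Matrix.mul_sub, Matrix.mul_sub, hP.isIdempotentElem.eq,
      hQ.isIdempotentElem.eq]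
    abel
  rw [trace_mul_comm, ← Matrix.mul_assoc, hsq]
  simp only [Matrix.add_mul, Matrix.sub_mul, trace_add, trace_sub]

end TraceForm

section ProjectiveMeasurement

variable {κ α : Type*} [Fintype κ] [DecidableEq κ] {S : Finset α}

theorem sum_trace_mul_eq_trace {R : Type*} [Semiring R] {P : α → Matrix κ κ R}
    (hPS : ∑ x ∈ S, P x = 1) (τ : Matrix κ κ R) : ∑ x ∈ S, (P x * τ).trace = τ.trace := by
  rw [← trace_sum, ← Finset.sum_mul, hPS, Matrix.one_mul]

theorem sum_trace_sub_mul_mul_conjTranspose {R : Type*} [CommRing R] [StarRing R]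
    {P Q : α → Matrix κ κ R} {τ : Matrix κ κ R} (hP : ∀ x, IsStarProjection (P x))
    (hQ : ∀ x, IsStarProjection (Q x)) (hPS : ∑ x ∈ S, P x = 1) (hQS : ∑ x ∈ S, Q x = 1)
    (hτ : τ.IsHermitian) :
    ∑ x ∈ S, ((P x - Q x) * τ * (P x - Q x)ᴴ).trace =
      τ.trace + τ.trace - ∑ x ∈ S, (P x * Q x * τ).trace
        - star (∑ x ∈ S, (P x * Q x * τ).trace) := by
  have hstar : ∀ x, star (P x * Q x * τ).trace = (Q x * P x * τ).trace := fun x =>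
    star_trace_mul_mul_of_isHermitian (hP x).isSelfAdjoint (hQ x).isSelfAdjoint hτ
  simp only [trace_sub_mul_mul_conjTranspose_of_isStarProjection (hP _) (hQ _),
    Finset.sum_sub_distrib, Finset.sum_add_distrib, sum_trace_mul_eq_trace hPS,
    sum_trace_mul_eq_trace hQS, star_sum, hstar]

theorem sum_trace_mul_mul_eq_trace_iff {𝕜 : Type*} [RCLike 𝕜] {P Q : α → Matrix κ κ 𝕜}
    {τ : Matrix κ κ 𝕜} (hP : ∀ x, IsStarProjection (P x)) (hQ : ∀ x, IsStarProjection (Q x))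
    (hPS : ∑ x ∈ S, P x = 1) (hQS : ∑ x ∈ S, Q x = 1) (hτ : τ.PosSemidef) :
    ∑ x ∈ S, (P x * Q x * τ).trace = τ.trace ↔ ∀ x ∈ S, P x * τ = Q x * τ := by
  constructor
  · intro hdiag
    have hzero : ∑ x ∈ S, ((P x - Q x) * τ * (P x - Q x)ᴴ).trace = 0 := by
      rw [sum_trace_sub_mul_mul_conjTranspose hP hQ hPS hQS hτ.isHermitian, hdiag,
        ← trace_conjTranspose, hτ.isHermitian.eq]
      ring
    intro x hx
    rw [← sub_eq_zero, ← Matrix.sub_mul, ← trace_mul_mul_conjTranspose_eq_zero_iff hτ]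
    exact (Finset.sum_eq_zero_iff_of_nonneg fun y _ =>
      (hτ.mul_mul_conjTranspose_same (P y - Q y)).trace_nonneg).mp hzero x hx
  · intro heq
    calc ∑ x ∈ S, (P x * Q x * τ).trace = ∑ x ∈ S, (P x * τ).trace :=
          Finset.sum_congr rfl fun x hx => by
            rw [Matrix.mul_assoc, ← heq x hx, ← Matrix.mul_assoc, (hP x).isIdempotentElem.eq]
      _ = τ.trace := sum_trace_mul_eq_trace hPS τ

theorem sum_trace_mul_mul_eq_trace_of_offDiag {R : Type*} [Semiring R] {P Q : α → Matrix κ κ R}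
    {τ : Matrix κ κ R} (hPS : ∑ x ∈ S, P x = 1) (hQS : ∑ x ∈ S, Q x = 1)
    (hoff : ∀ x y, x ≠ y → (P x * Q y * τ).trace = 0) :
    ∑ x ∈ S, (P x * Q x * τ).trace = τ.trace :=
  calc ∑ x ∈ S, (P x * Q x * τ).trace = ∑ x ∈ S, ∑ y ∈ S, (P x * Q y * τ).trace :=
        Finset.sum_congr rfl fun x hx =>
          (Finset.sum_eq_single_of_mem x hx fun y _ hyx => hoff x y hyx.symm).symm
    _ = ((∑ x ∈ S, P x) * (∑ y ∈ S, Q y) * τ).trace := by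
        rw [Finset.sum_mul_sum]
        simp only [Finset.sum_mul, trace_sum]
    _ = τ.trace := by rw [hPS, hQS, Matrix.one_mul, Matrix.one_mul]

end ProjectiveMeasurement

section FunctionalCalculus

variable {κ : Type*} [Fintype κ] [DecidableEq κ] {C : Matrix ι ι ℂ}

theorem coe_eigFinset (hC : C.IsHermitian) : (eigFinset C : Set ℝ) = spectrum ℝ C := by
  simp [eigFinset, hC, hC.spectrum_real_eq_range_eigenvalues]

theorem specProj_eq_cfc (C : Matrix ι ι ℂ) (x : ℝ) : specProj C x = cfc (Pi.single x 1) C := by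
  by_cases hC : C.IsHermitian
  · rw [hC.cfc_eq, IsHermitian.cfc, Unitary.conjStarAlgAut_apply, specProj, dif_pos hC]
    congr! 3
    ext i
    simp [Pi.single_apply, apply_ite]
  · rw [specProj, dif_neg hC, cfc_apply_of_not_predicate (p := IsSelfAdjoint) C hC]

theorem matFun_eq_cfc (f : ℝ → ℝ) (C : Matrix ι ι ℂ) : matFun f C = cfc f C := by
  by_cases hC : C.IsHermitian
  · have hcont : ∀ h : ℝ → ℝ, ContinuousOn h (spectrum ℝ C) := C.finite_real_spectrum.continuousOn
    calc matFun f C = ∑ x ∈ eigFinset C, cfc (f x • Pi.single x 1) C :=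
          Finset.sum_congr rfl fun x _ => by
            rw [specProj_eq_cfc, Complex.coe_smul]
            exact (cfc_smul (f x) _ C (hcont _)).symm
      _ = cfc (∑ x ∈ eigFinset C, f x • Pi.single x 1) C := (cfc_sum _ C _ fun _ _ => hcont _).symm
      _ = cfc f C := cfc_congr fun x hx => by
          have hx' : x ∈ eigFinset C := by rwa [← Finset.mem_coe, coe_eigFinset hC]
          simp [Finset.sum_apply, Pi.single_apply, hx']
  · rw [cfc_apply_of_not_predicate (p := IsSelfAdjoint) C hC, matFun, eigFinset, dif_neg hC,
      Finset.sum_empty]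

theorem isHermitian_matFun (f : ℝ → ℝ) (C : Matrix ι ι ℂ) : (matFun f C).IsHermitian := by
  rw [matFun_eq_cfc]
  exact cfc_predicate f C

theorem specProj_mul_specProj (C : Matrix ι ι ℂ) (x y : ℝ) :
    specProj C x * specProj C y = if x = y then specProj C x else 0 := by
  have hcont : ∀ h : ℝ → ℝ, ContinuousOn h (spectrum ℝ C) := C.finite_real_spectrum.continuousOn
  simp only [specProj_eq_cfc]
  rw [← cfc_mul _ _ C (hcont _) (hcont _), ← cfc_zero ℝ C, ← apply_ite (cfc · C)]
  congr with t
  split_ifs with hxy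
  · simp [hxy, Pi.single_apply]
  · simp only [Pi.single_apply, Pi.zero_apply]
    grind

theorem isStarProjection_specProj (C : Matrix ι ι ℂ) (x : ℝ) : IsStarProjection (specProj C x) where
  isIdempotentElem := by rw [IsIdempotentElem, specProj_mul_specProj, if_pos rfl]
  isSelfAdjoint := by rw [specProj_eq_cfc]; exact cfc_predicate _ C

theorem specProj_eq_zero_of_notMem {x : ℝ} (hx : x ∉ eigFinset C) : specProj C x = 0 := by
  by_cases hC : C.IsHermitian
  · rw [← Finset.mem_coe, coe_eigFinset hC] at hx
    rw [specProj_eq_cfc, ← cfc_zero ℝ C]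
    exact cfc_congr fun t ht => Pi.single_eq_of_ne (ne_of_mem_of_not_mem ht hx) 1
  · rw [specProj, dif_neg hC]

theorem sum_specProj_eq_one (hC : C.IsHermitian) {S : Finset ℝ} (hS : eigFinset C ⊆ S) :
    ∑ x ∈ S, specProj C x = 1 := by
  rw [← Finset.sum_subset hS fun x _ hx => specProj_eq_zero_of_notMem hx,
    ← cfc_one ℝ C hC.isSelfAdjoint, ← matFun_eq_cfc]
  simp [matFun]

theorem specProj_matFun (hC : C.IsHermitian) (f : ℝ → ℝ) (x : ℝ) :
    specProj (matFun f C) x = ∑ y ∈ eigFinset C with f y = x, specProj C y := by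
  have hfin := C.finite_real_spectrum
  rw [matFun_eq_cfc, specProj_eq_cfc,
    ← cfc_comp _ f C hC.isSelfAdjoint ((hfin.image f).continuousOn _) (hfin.continuousOn f),
    ← matFun_eq_cfc, matFun, Finset.sum_filter]
  refine Finset.sum_congr rfl fun y _ => ?_
  simp [Pi.single_apply]

theorem specProj_starAlgHom_apply (φ : Matrix ι ι ℂ →⋆ₐ[ℂ] Matrix κ κ ℂ) (hC : C.IsHermitian)
    (x : ℝ) : specProj (φ C) x = φ (specProj C x) := by
  rw [specProj_eq_cfc, specProj_eq_cfc]
  exact (φ.map_cfc _ C (C.finite_real_spectrum.continuousOn _)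
    φ.toLinearMap.continuous_of_finiteDimensional hC (hC.isSelfAdjoint.map φ)).symm

end FunctionalCalculus

section IdenticalCorrelation

variable {C D τ : Matrix ι ι ℂ}

theorem commutingIn_of_specProj_mul_eq (h : ∀ x, specProj C x * τ = specProj D x * τ) :
    CommutingIn C D τ := by
  intro x y
  have hCD : specProj C x * specProj D y * τ = specProj C x * specProj C y * τ := by
    rw [Matrix.mul_assoc, ← h y, Matrix.mul_assoc]
  have hDC : specProj D y * specProj C x * τ = specProj D y * specProj D x * τ := by
    rw [Matrix.mul_assoc, h x, Matrix.mul_assoc]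
  rw [Matrix.sub_mul, hCD, hDC, specProj_mul_specProj, specProj_mul_specProj]
  rcases eq_or_ne x y with rfl | hxy
  · simp [h]
  · simp [hxy, hxy.symm]

theorem sum_trace_specProj_mul_specProj_mul_eq_one_iff (hC : C.IsHermitian) (hD : D.IsHermitian)
    (hτ : τ.PosSemidef) (htr : τ.trace = 1) {S : Finset ℝ} (hCS : eigFinset C ⊆ S)
    (hDS : eigFinset D ⊆ S) :
    ∑ x ∈ S, (specProj C x * specProj D x * τ).trace = 1 ↔
      ∀ x, specProj C x * τ = specProj D x * τ := by
  rw [← htr, sum_trace_mul_mul_eq_trace_iff (isStarProjection_specProj C)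
    (isStarProjection_specProj D) (sum_specProj_eq_one hC hCS) (sum_specProj_eq_one hD hDS) hτ]
  refine ⟨fun h x => ?_, fun h x _ => h x⟩
  by_cases hx : x ∈ S
  · exact h x hx
  · rw [specProj_eq_zero_of_notMem (mt (@hCS x) hx), specProj_eq_zero_of_notMem (mt (@hDS x) hx)]

theorem qic_iff_forall_specProj_mul_eq (hC : C.IsHermitian) (hD : D.IsHermitian)
    (hτ : τ.PosSemidef) (htr : τ.trace = 1) :
    QIC C D τ ↔ ∀ x, specProj C x * τ = specProj D x * τ := by
  have hsum : ∑ x ∈ eigFinset C, (specProj C x * specProj D x * τ).trace =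
      ∑ x ∈ eigFinset C ∪ eigFinset D, (specProj C x * specProj D x * τ).trace :=
    Finset.sum_subset Finset.subset_union_left fun x _ hx => by
      simp [specProj_eq_zero_of_notMem hx]
  rw [QIC, hsum, sum_trace_specProj_mul_specProj_mul_eq_one_iff hC hD hτ htr
    Finset.subset_union_left Finset.subset_union_right]
  exact and_iff_right_of_imp commutingIn_of_specProj_mul_eq

theorem qic_iff_trace_specProj_mul_specProj_mul_eq_zero (hC : C.IsHermitian) (hD : D.IsHermitian)
    (hτ : τ.PosSemidef) (htr : τ.trace = 1) :
    QIC C D τ ↔ ∀ x y, x ≠ y → (specProj C x * specProj D y * τ).trace = 0 := by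
  rw [qic_iff_forall_specProj_mul_eq hC hD hτ htr]
  constructor
  · intro h x y hxy
    rw [Matrix.mul_assoc, ← h y, ← Matrix.mul_assoc, specProj_mul_specProj, if_neg hxy,
      Matrix.zero_mul, trace_zero]
  · intro hoff
    have hCS : eigFinset C ⊆ eigFinset C ∪ eigFinset D := Finset.subset_union_left
    have hDS : eigFinset D ⊆ eigFinset C ∪ eigFinset D := Finset.subset_union_right
    rw [← sum_trace_specProj_mul_specProj_mul_eq_one_iff hC hD hτ htr hCS hDS, ← htr]
    exact sum_trace_mul_mul_eq_trace_of_offDiag (sum_specProj_eq_one hC hCS)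
      (sum_specProj_eq_one hD hDS) hoff

end IdenticalCorrelation

section Kronecker

variable {R κ l : Type*} [CommSemiring R] [StarRing R] [Fintype κ] [DecidableEq κ] [Fintype l]
  [DecidableEq l]

/-- The ampliation `A ↦ A ⊗ I` of observables of the measured system to the composite system. -/
def kroneckerOneStarAlgHom : Matrix κ κ R →⋆ₐ[R] Matrix (κ × l) (κ × l) R where
  toFun A := A ⊗ₖ 1
  map_one' := one_kronecker_one
  map_mul' A B := by rw [← mul_kronecker_mul, Matrix.one_mul]
  map_zero' := zero_kronecker 1
  map_add' A B := add_kronecker A B 1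
  commutes' r := by
    rw [Algebra.algebraMap_eq_smul_one, smul_kronecker, one_kronecker_one,
      Algebra.algebraMap_eq_smul_one]
  map_star' A := by
    rw [star_eq_conjTranspose, star_eq_conjTranspose, conjTranspose_kronecker, conjTranspose_one]

/-- The ampliation `X ↦ I ⊗ X` of observables of the probe to the composite system. -/
def oneKroneckerStarAlgHom : Matrix l l R →⋆ₐ[R] Matrix (κ × l) (κ × l) R where
  toFun X := 1 ⊗ₖ X
  map_one' := one_kronecker_one
  map_mul' X Y := by rw [← mul_kronecker_mul, Matrix.one_mul]
  map_zero' := kronecker_zero 1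
  map_add' X Y := kronecker_add 1 X Y
  commutes' r := by
    rw [Algebra.algebraMap_eq_smul_one, kronecker_smul, one_kronecker_one,
      Algebra.algebraMap_eq_smul_one]
  map_star' X := by
    rw [star_eq_conjTranspose, star_eq_conjTranspose, conjTranspose_kronecker, conjTranspose_one]

/-- The Heisenberg-picture evolution `X ↦ U†(I ⊗ X)U` of observables of the probe. -/
def heisenbergStarAlgHom (U : unitary (Matrix (κ × l) (κ × l) R)) :
    Matrix l l R →⋆ₐ[R] Matrix (κ × l) (κ × l) R :=
  (Unitary.conjStarAlgAut R _ (star U)).toStarAlgHom.comp oneKroneckerStarAlgHom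

theorem heisenbergStarAlgHom_apply (U : unitary (Matrix (κ × l) (κ × l) R)) (X : Matrix l l R) :
    heisenbergStarAlgHom U X =
      (U : Matrix (κ × l) (κ × l) R)ᴴ * ((1 : Matrix κ κ R) ⊗ₖ X) *
        (U : Matrix (κ × l) (κ × l) R) :=
  Unitary.conjStarAlgAut_star_apply (S := R) U _

end Kronecker

section CompositeObservables

variable {κ l : Type*} [Fintype κ] [DecidableEq κ] [Fintype l] [DecidableEq l]

theorem specProj_meter {U : Matrix (κ × l) (κ × l) ℂ} {M : Matrix l l ℂ}
    (hU : U ∈ unitaryGroup (κ × l) ℂ) (hM : M.IsHermitian) (f : ℝ → ℝ) (x : ℝ) :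
    specProj (Uᴴ * ((1 : Matrix κ κ ℂ) ⊗ₖ matFun f M) * U) x =
      ∑ y ∈ eigFinset M with f y = x, Uᴴ * ((1 : Matrix κ κ ℂ) ⊗ₖ specProj M y) * U := by
  have h := specProj_starAlgHom_apply (heisenbergStarAlgHom ⟨U, hU⟩) (isHermitian_matFun f M) x
  rw [specProj_matFun hM, map_sum] at h
  simpa only [heisenbergStarAlgHom_apply] using h

theorem specProj_kronecker_one {A : Matrix κ κ ℂ} (hA : A.IsHermitian) (a : ℝ) :
    specProj (A ⊗ₖ (1 : Matrix l l ℂ)) a = specProj A a ⊗ₖ 1 :=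
  specProj_starAlgHom_apply kroneckerOneStarAlgHom hA a

end CompositeObservables

theorem forall_disjoint_trace_sum_eq_zero_iff {R κ α β : Type*} [NonUnitalNonAssocSemiring R]
    [Fintype κ] [DecidableEq β] (T : Finset α) (h : α → β) (E : α → Matrix κ κ R)
    (F : β → Matrix κ κ R) (ρ : Matrix κ κ R) :
    (∀ Δ Γ : Finset β, Disjoint Δ Γ →
      ((∑ y ∈ T with h y ∈ Δ, E y) * (∑ a ∈ Γ, F a) * ρ).trace = 0) ↔
    ∀ x a, x ≠ a → ((∑ y ∈ T with h y = x, E y) * F a * ρ).trace = 0 := by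
  constructor
  · intro H x a hxa
    simpa only [Finset.mem_singleton, Finset.sum_singleton] using
      H {x} {a} (Finset.disjoint_singleton.mpr hxa)
  · intro H Δ Γ hΔΓ
    have hfiber : ∑ y ∈ T with h y ∈ Δ, E y = ∑ x ∈ Δ, ∑ y ∈ T with h y = x, E y := by
      simp only [Finset.sum_filter]
      rw [Finset.sum_comm]
      exact Finset.sum_congr rfl fun y _ => (Finset.sum_ite_eq Δ (h y) fun _ => E y).symm
    rw [hfiber, Finset.sum_mul_sum, Finset.sum_mul, trace_sum]
    refine Finset.sum_eq_zero fun x hx => ?_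
    rw [Finset.sum_mul, trace_sum]
    exact Finset.sum_eq_zero fun a ha => H x a (Finset.disjoint_iff_ne.mp hΔΓ x hx a ha)

section MeasuringProcess

variable {n m : ℕ} {ξ : Fin m → ℂ} {U : Matrix (Fin n × Fin m) (Fin n × Fin m) ℂ}
  {M : Matrix (Fin m) (Fin m) ℂ} {A ρ : Matrix (Fin n) (Fin n) ℂ}

theorem trace_mul_kronecker_one (Z : Matrix (Fin n × Fin m) (Fin n × Fin m) ℂ)
    (W : Matrix (Fin n) (Fin n) ℂ) : (Z * (W ⊗ₖ 1)).trace = (trK Z * W).trace := by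
  simp only [trace, diag, mul_apply, trK, of_apply, Fintype.sum_prod_type, kroneckerMap_apply,
    one_apply, mul_ite, mul_one, mul_zero, Finset.sum_ite_eq', Finset.mem_univ, if_true,
    Finset.sum_mul]
  exact Finset.sum_congr rfl fun i _ => Finset.sum_comm

theorem trace_povmOf_mul_mul (ξ : Fin m → ℂ) (U : Matrix (Fin n × Fin m) (Fin n × Fin m) ℂ)
    (M : Matrix (Fin m) (Fin m) ℂ) (Y ρ : Matrix (Fin n) (Fin n) ℂ) (y : ℝ) :
    (povmOf U M ξ y * Y * ρ).trace =
      (Uᴴ * (1 ⊗ₖ specProj M y) * U * (Y ⊗ₖ 1) * (ρ ⊗ₖ rankOneProj ξ)).trace := by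
  rw [povmOf, Matrix.mul_assoc (trK _), ← trace_mul_kronecker_one]
  simp only [Matrix.mul_assoc, ← mul_kronecker_mul, Matrix.one_mul, Matrix.mul_one]

theorem trace_specProj_meter_mul (hU : U ∈ unitaryGroup (Fin n × Fin m) ℂ) (hM : M.IsHermitian)
    (hA : A.IsHermitian) (f : ℝ → ℝ) (x a : ℝ) :
    (specProj (Uᴴ * ((1 : Matrix (Fin n) (Fin n) ℂ) ⊗ₖ matFun f M) * U) x *
        specProj (A ⊗ₖ (1 : Matrix (Fin m) (Fin m) ℂ)) a * (ρ ⊗ₖ rankOneProj ξ)).trace =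
      ((∑ y ∈ eigFinset M with f y = x, povmOf U M ξ y) * specProj A a * ρ).trace := by
  rw [specProj_meter hU hM, specProj_kronecker_one hA]
  simp only [Finset.sum_mul, trace_sum, trace_povmOf_mul_mul]

theorem qic_meter_iff_povm (hξ : star ξ ⬝ᵥ ξ = 1) (hU : U ∈ unitaryGroup (Fin n × Fin m) ℂ)
    (hM : M.IsHermitian) (hA : A.IsHermitian) (f : ℝ → ℝ) (hρ : ρ.PosSemidef)
    (hρtr : ρ.trace = 1) :
    QIC (Uᴴ * ((1 : Matrix (Fin n) (Fin n) ℂ) ⊗ₖ matFun f M) * U)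
        (A ⊗ₖ (1 : Matrix (Fin m) (Fin m) ℂ)) (ρ ⊗ₖ rankOneProj ξ) ↔
      ∀ Δ Γ : Finset ℝ, Disjoint Δ Γ →
        ((∑ y ∈ eigFinset M with f y ∈ Δ, povmOf U M ξ y) *
          (∑ a ∈ Γ, specProj A a) * ρ).trace = 0 := by
  have hmeter : (Uᴴ * ((1 : Matrix (Fin n) (Fin n) ℂ) ⊗ₖ matFun f M) * U).IsHermitian :=
    isHermitian_conjTranspose_mul_mul U
      ((isHermitian_matFun f M).isSelfAdjoint.map oneKroneckerStarAlgHom)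
  have hsystem : (A ⊗ₖ (1 : Matrix (Fin m) (Fin m) ℂ)).IsHermitian :=
    hA.isSelfAdjoint.map kroneckerOneStarAlgHom
  have hstate : (ρ ⊗ₖ rankOneProj ξ).PosSemidef :=
    hρ.kronecker (posSemidef_vecMulVec_self_star ξ)
  have hstate_tr : (ρ ⊗ₖ rankOneProj ξ).trace = 1 := by
    rw [trace_kronecker, hρtr, rankOneProj, trace_vecMulVec, dotProduct_comm, hξ, one_mul]
  rw [qic_iff_trace_specProj_mul_specProj_mul_eq_zero hmeter hsystem hstate hstate_tr,
    forall_disjoint_trace_sum_eq_zero_iff]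
  simp only [trace_specProj_meter_mul hU hM hA]

end MeasuringProcess

/-- Characterization of simultaneous measurement by the POVM: the measuring
process `(ℂᵐ, ξ, U, M)` simultaneously measures `A` and `B` with `f` and `g`
in the state `ρ` iff the POVM satisfies the stated vanishing conditions for all
pairs of disjoint finite subsets of `ℝ`. -/
theorem simultaneous_measurement_iff_povm {n m : ℕ} (hn : 0 < n) (hm : 0 < m)
    (ξ : Fin m → ℂ) (hξ : star ξ ⬝ᵥ ξ = 1)
    (U : Matrix (Fin n × Fin m) (Fin n × Fin m) ℂ)
    (hU : U * Uᴴ = 1) (hU' : Uᴴ * U = 1)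
    (M : Matrix (Fin m) (Fin m) ℂ) (hM : M.IsHermitian)
    (A B : Matrix (Fin n) (Fin n) ℂ) (hA : A.IsHermitian) (hB : B.IsHermitian)
    (f g : ℝ → ℝ)
    (ρ : Matrix (Fin n) (Fin n) ℂ) (hρ : ρ.PosSemidef) (hρtr : ρ.trace = 1) :
    (QIC (Uᴴ * ((1 : Matrix (Fin n) (Fin n) ℂ) ⊗ₖ matFun f M) * U)
        (A ⊗ₖ (1 : Matrix (Fin m) (Fin m) ℂ)) (ρ ⊗ₖ rankOneProj ξ) ∧
      QIC (Uᴴ * ((1 : Matrix (Fin n) (Fin n) ℂ) ⊗ₖ matFun g M) * U)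
        (B ⊗ₖ (1 : Matrix (Fin m) (Fin m) ℂ)) (ρ ⊗ₖ rankOneProj ξ))
    ↔
    ∀ Δ Γ : Finset ℝ, Disjoint Δ Γ →
      ((∑ y ∈ (eigFinset M).filter (fun y => f y ∈ Δ), povmOf U M ξ y) *
          (∑ a ∈ Γ, specProj A a) * ρ).trace = 0 ∧
      ((∑ y ∈ (eigFinset M).filter (fun y => g y ∈ Δ), povmOf U M ξ y) *
          (∑ b ∈ Γ, specProj B b) * ρ).trace = 0 := by
  have hU_mem : U ∈ unitaryGroup (Fin n × Fin m) ℂ := ⟨hU', hU⟩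
  rw [qic_meter_iff_povm hξ hU_mem hM hA f hρ hρtr, qic_meter_iff_povm hξ hU_mem hM hB g hρ hρtr]
  simp only [imp_and, forall_and]
end
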